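/- Let G be a group and let ω be a bounded homogeneous 2-cocycle on G. Let E be the central extension of G by ℝ associated to ω, namely the set ℝ × G with group law (λ, f)·(μ, g) = (λ + μ + ω(f, g), fg), and let σ : G → E be the section σ(g) = (0, g). Then for all f, g ∈ G one has σ(g⁻¹fg) = σ(g)⁻¹σ(f)σ(g) in E. -/

import Mathlib

/-- A bounded 2-cocycle on `G` with trivial real coefficients. -/
def IsBounded2Cocycle {G : Type*} [Group G] (ω : G → G → ℝ) : Prop :=
  (∃ C : ℝ, ∀ g h : G, |ω g h| ≤ C) ∧
    ∀ g₁ g₂ g₃ : G, ω g₂ g₃ - ω (g₁ * g₂) g₃ + ω g₁ (g₂ * g₃) - ω g₁ g₂ = 0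

/-- `ω` is the coboundary of a bounded real-valued function. -/
def IsCoboundaryOfBounded {G : Type*} [Group G] (ω : G → G → ℝ) : Prop :=
  ∃ φ : G → ℝ, (∃ C : ℝ, ∀ g : G, |φ g| ≤ C) ∧
    ∀ g h : G, ω g h = φ h - φ (g * h) + φ g

/-- A group is 2-boundedly acyclic if `H²_b(G; ℝ) = 0`, i.e. every bounded 2-cocycle is
the coboundary of a bounded function. -/
def Is2BoundedlyAcyclic (G : Type*) [Group G] : Prop :=
  ∀ ω : G → G → ℝ, IsBounded2Cocycle ω → IsCoboundaryOfBounded ω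

/-- A 2-cocycle is homogeneous if it vanishes on powers of a single element. -/
def IsHomogeneous {G : Type*} [Group G] (ω : G → G → ℝ) : Prop :=
  ∀ (g : G) (i j : ℤ), ω (g ^ i) (g ^ j) = 0

/-- The underlying set `ℝ × G` of the central extension of `G` by `ℝ` determined by a
2-cocycle `ω`. -/
@[ext]
structure CocycleExt (G : Type*) (ω : G → G → ℝ) where
  re : ℝ
  el : G

/-- The group law `(λ, f)·(μ, g) = (λ + μ + ω(f,g), fg)` on the central extension
determined by a homogeneous 2-cocycle `ω`. -/
def extGroup {G : Type*} [Group G] (ω : G → G → ℝ)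
    (hc : ∀ g₁ g₂ g₃ : G, ω g₂ g₃ - ω (g₁ * g₂) g₃ + ω g₁ (g₂ * g₃) - ω g₁ g₂ = 0)
    (hh : IsHomogeneous ω) : Group (CocycleExt G ω) where
  mul p q := ⟨p.re + q.re + ω p.el q.el, p.el * q.el⟩
  one := ⟨0, 1⟩
  inv p := ⟨-p.re - ω p.el⁻¹ p.el, p.el⁻¹⟩
  mul_assoc p q r := by
    ext
    · have := hc p.el q.el r.el
      show p.re + q.re + ω p.el q.el + r.re + ω (p.el * q.el) r.el =
        p.re + (q.re + r.re + ω q.el r.el) + ω p.el (q.el * r.el)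
      linarith
    · exact mul_assoc _ _ _
  one_mul p := by
    have h0 : ω 1 p.el = 0 := by
      have := hh p.el 0 1
      simpa using this
    ext
    · show 0 + p.re + ω 1 p.el = p.re
      rw [h0]; ring
    · exact one_mul _
  mul_one p := by
    have h0 : ω p.el 1 = 0 := by
      have := hh p.el 1 0
      simpa using this
    ext
    · show p.re + 0 + ω p.el 1 = p.re
      rw [h0]; ring
    · exact mul_one _
  inv_mul_cancel p := by
    ext
    · show -p.re - ω p.el⁻¹ p.el + p.re + ω p.el⁻¹ p.el = 0
      ring
    · exact inv_mul_cancel _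

/-!
On the extension `E = ℝ × G`, the first coordinate `re : E → ℝ` is a homogeneous quasimorphism:
it fails to be additive by the bounded cocycle `ω`, and `re (pⁿ) = n • re p` because `ω`
vanishes on powers of a single element. Homogeneous quasimorphisms are invariant under
conjugation, so `σ(g)⁻¹ σ(f) σ(g)` has the same first coordinate as `σ(f)`, namely `0`.
-/

/-- A homogeneous quasimorphism: a map additive up to a bounded error and exactly additive on
powers. Only natural exponents are used, so that the notion makes sense on a monoid. -/
structure IsHomogeneousQuasimorphism {M V : Type*} [Monoid M] [SeminormedAddCommGroup V]
    (φ : M → V) : Prop where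
  exists_norm_map_mul_sub_le : ∃ D : ℝ, ∀ x y : M, ‖φ (x * y) - (φ x + φ y)‖ ≤ D
  map_pow : ∀ (x : M) (n : ℕ), φ (x ^ n) = n • φ x

theorem eq_zero_of_forall_norm_nsmul_le {V : Type*} [NormedAddCommGroup V] [NormedSpace ℝ V]
    {v : V} {C : ℝ} (h : ∀ n : ℕ, ‖n • v‖ ≤ C) : v = 0 := by
  by_contra hv
  obtain ⟨n, hn⟩ := exists_lt_nsmul (norm_pos_iff.mpr hv) C
  rw [← RCLike.norm_nsmul ℝ] at hn
  exact (h n).not_gt hn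

theorem IsHomogeneousQuasimorphism.eq_of_semiconjBy {M V : Type*} [Monoid M]
    [NormedAddCommGroup V] [NormedSpace ℝ V] {φ : M → V} (hφ : IsHomogeneousQuasimorphism φ)
    {a x y : M} (h : SemiconjBy a x y) : φ x = φ y := by
  -- Apply `φ` to both sides of `a * x ^ n = y ^ n * a`: the error stays bounded as `n` grows.
  obtain ⟨D, hD⟩ := hφ.exists_norm_map_mul_sub_le
  refine sub_eq_zero.mp (eq_zero_of_forall_norm_nsmul_le (C := D + D) fun n ↦ ?_)
  have hn : a * x ^ n = y ^ n * a := h.pow_right n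
  calc ‖n • (φ x - φ y)‖
      = ‖(φ (y ^ n * a) - (φ (y ^ n) + φ a)) - (φ (a * x ^ n) - (φ a + φ (x ^ n)))‖ := by
        rw [hn, hφ.map_pow, hφ.map_pow, nsmul_sub]
        congr 1
        abel
    _ ≤ D + D := norm_sub_le_of_le (hD _ _) (hD _ _)

namespace CocycleExt

variable {G : Type*} [Group G] {ω : G → G → ℝ}

theorem pow_eq_mk
    (hc : ∀ g₁ g₂ g₃ : G, ω g₂ g₃ - ω (g₁ * g₂) g₃ + ω g₁ (g₂ * g₃) - ω g₁ g₂ = 0)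
    (hh : IsHomogeneous ω) (p : CocycleExt G ω) (n : ℕ) :
    letI : Group (CocycleExt G ω) := extGroup ω hc hh
    p ^ n = ⟨n • p.re, p.el ^ n⟩ := by
  let : Group (CocycleExt G ω) := extGroup ω hc hh
  induction n with
  | zero => rw [pow_zero, pow_zero, zero_nsmul]; rfl
  | succ n ih =>
    have hω : ω (p.el ^ n) p.el = 0 := by simpa using hh p.el n 1
    calc p ^ (n + 1) = ⟨n • p.re, p.el ^ n⟩ * p := by rw [pow_succ, ih]
      _ = ⟨n • p.re + p.re + ω (p.el ^ n) p.el, p.el ^ n * p.el⟩ := rfl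
      _ = ⟨(n + 1) • p.re, p.el ^ (n + 1)⟩ := by rw [hω, add_zero, succ_nsmul, pow_succ]

theorem isHomogeneousQuasimorphism_re (hb : IsBounded2Cocycle ω) (hh : IsHomogeneous ω) :
    letI : Group (CocycleExt G ω) := extGroup ω hb.2 hh
    IsHomogeneousQuasimorphism (re : CocycleExt G ω → ℝ) := by
  let : Group (CocycleExt G ω) := extGroup ω hb.2 hh
  obtain ⟨C, hC⟩ := hb.1
  refine ⟨⟨C, fun p q ↦ ?_⟩, fun p n ↦ congrArg re (pow_eq_mk hb.2 hh p n)⟩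
  have hmul : (p * q).re = p.re + q.re + ω p.el q.el := rfl
  rw [hmul, add_sub_cancel_left]
  exact hC p.el q.el

end CocycleExt

/-- For a bounded homogeneous 2-cocycle `ω` on `G`, the canonical
section `σ(g) = (0, g)` of the associated central extension `E = ℝ × G` is compatible
with conjugation: `σ(g⁻¹ f g) = σ(g)⁻¹ σ(f) σ(g)`. -/
theorem section_of_homogeneous_cocycle_conj {G : Type*} [Group G] (ω : G → G → ℝ)
    (hb : IsBounded2Cocycle ω) (hh : IsHomogeneous ω) (f g : G) :
    letI : Group (CocycleExt G ω) := extGroup ω hb.2 hh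
    (⟨0, g⁻¹ * f * g⟩ : CocycleExt G ω) =
      (⟨0, g⟩ : CocycleExt G ω)⁻¹ * ⟨0, f⟩ * ⟨0, g⟩ := by
  let : Group (CocycleExt G ω) := extGroup ω hb.2 hh
  have hconj : SemiconjBy (⟨0, g⟩ : CocycleExt G ω) (⟨0, g⟩⁻¹ * ⟨0, f⟩ * ⟨0, g⟩) ⟨0, f⟩ := by
    simp [SemiconjBy, mul_assoc]
  have hre : ((⟨0, g⟩ : CocycleExt G ω)⁻¹ * ⟨0, f⟩ * ⟨0, g⟩).re = 0 :=
    (CocycleExt.isHomogeneousQuasimorphism_re hb hh).eq_of_semiconjBy hconj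
  exact CocycleExt.ext hre.symm rfl
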